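/- One iteration of the LR-Kron alternating minimization algorithm does not increase the objective: let S ∈ ℂ^{pq×pq} be Hermitian positive semidefinite, let A_k ∈ ℂ^{p×p} be Hermitian positive semidefinite with A_k ≠ 0 and rank(A_k) ≤ r_a, and let B_k ∈ ℂ^{q×q} with rank(B_k) ≤ r_b, where 1 ≤ r_a ≤ p and 1 ≤ r_b ≤ q. Define B_{k+1} := EIG_{r_b}( (Σ_{i,j=1}^p conj((A_k)_{ij}) S(i,j)) / ‖A_k‖_F² ), assume B_{k+1} ≠ 0, and define A_{k+1} := EIG_{r_a}(R_A) where (R_A)_{ij} := tr(B_{k+1}^H S(i,j)) / ‖B_{k+1}‖_F². Then ‖S − A_{k+1}⊗B_{k+1}‖_F ≤ ‖S − A_k⊗B_{k+1}‖_F ≤ ‖S − A_k⊗B_k‖_F. -/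

import Mathlib

open Matrix Kronecker BigOperators ComplexOrder

/-- Squared Frobenius norm of a complex matrix. -/
noncomputable def frobSq {m n : Type*} [Fintype m] [Fintype n] (M : Matrix m n ℂ) : ℝ :=
  ∑ i, ∑ j, Complex.normSq (M i j)

/-- The (i,j)-th q×q block of a pq×pq matrix. -/
def blk {p q : ℕ} (S : Matrix (Fin p × Fin q) (Fin p × Fin q) ℂ) (i j : Fin p) :
    Matrix (Fin q) (Fin q) ℂ := Matrix.of fun k l => S (i, k) (j, l)

/-!
Fix `A`, and let `R` satisfy the normal equation `‖A‖² R = ⟨A, S⟩`, the inner product being taken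
over the first Kronecker factor only. Pythagoras gives
`‖S - A ⊗ B‖² = ‖S - A ⊗ R‖² + ‖A‖² ‖R - B‖²`, so the best `B` of rank at most `r` is the best
approximation of `R` of rank at most `r`, which by Eckart–Young is a truncation of `R`. Exchanging
the two Kronecker factors gives the update of `A`.

For Eckart–Young, let `R = ∑ cᵢ uᵢ vᵢᴴ` and let `P` be the orthogonal projection onto the range
of `X`. Bessel's inequality for `v` gives
`‖R - X‖² ≥ ∑ ‖cᵢ uᵢ - X vᵢ‖² ≥ ∑ |cᵢ|² (1 - ‖P uᵢ‖²)`, where the weights `‖P uᵢ‖² ≤ 1` sum to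
at most `rank X`; the right-hand side is least when they are concentrated on the largest `|cᵢ|`.
-/

section Weights

variable {ι : Type*}

lemma exists_nonneg_separating_threshold [Finite ι] {s : Finset ι} {w : ι → ℝ} (hw : ∀ i, 0 ≤ w i)
    (hs : ∀ i ∈ s, ∀ j ∉ s, w j ≤ w i) :
    ∃ τ, 0 ≤ τ ∧ (∀ i ∈ s, τ ≤ w i) ∧ ∀ j ∉ s, w j ≤ τ := by
  classical
  have := Fintype.ofFinite ι
  rcases sᶜ.eq_empty_or_nonempty with hempty | hne
  · exact ⟨0, le_rfl, fun i _ => hw i,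
      fun j hj => absurd (Finset.compl_eq_empty_iff s |>.mp hempty ▸ Finset.mem_univ j) hj⟩
  · obtain ⟨k, hk, hmax⟩ := sᶜ.exists_max_image w hne
    exact ⟨w k, hw k, fun i hi => hs i hi k (Finset.mem_compl.mp hk),
      fun j hj => hmax j (Finset.mem_compl.mpr hj)⟩

lemma sum_mul_le_sum_of_sum_le_card [Fintype ι] {s : Finset ι} {w t : ι → ℝ} (hw : ∀ i, 0 ≤ w i)
    (hs : ∀ i ∈ s, ∀ j ∉ s, w j ≤ w i) (ht0 : ∀ i, 0 ≤ t i) (ht1 : ∀ i, t i ≤ 1)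
    (hts : ∑ i, t i ≤ s.card) : ∑ i, w i * t i ≤ ∑ i ∈ s, w i := by
  classical
  obtain ⟨τ, hτ0, hτs, hτc⟩ := exists_nonneg_separating_threshold hw hs
  have hterm (i : ι) : (w i - τ) * t i ≤ if i ∈ s then w i - τ else 0 := by
    split_ifs with hi
    · exact mul_le_of_le_one_right (sub_nonneg.mpr (hτs i hi)) (ht1 i)
    · exact mul_nonpos_of_nonpos_of_nonneg (sub_nonpos.mpr (hτc i hi)) (ht0 i)
  calc ∑ i, w i * t i = ∑ i, (w i - τ) * t i + τ * ∑ i, t i := by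
        rw [Finset.mul_sum, ← Finset.sum_add_distrib]
        exact Finset.sum_congr rfl fun i _ => by ring
    _ ≤ ∑ i ∈ s, (w i - τ) + τ * s.card := by
        gcongr
        simpa using Finset.sum_le_sum fun i (_ : i ∈ Finset.univ) => hterm i
    _ = ∑ i ∈ s, w i := by simp [Finset.sum_sub_distrib, mul_comm]

end Weights

section InnerProduct

variable {𝕜 E ι : Type*} [RCLike 𝕜] [NormedAddCommGroup E] [InnerProductSpace 𝕜 E]

lemma norm_sub_smul_sq_of_inner_sub_smul_eq_zero {a s : E} {r : 𝕜}
    (hr : inner 𝕜 (s - r • a) a = 0) (b : 𝕜) :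
    ‖s - b • a‖ ^ 2 = ‖s - r • a‖ ^ 2 + ‖a‖ ^ 2 * ‖r - b‖ ^ 2 := by
  have horth : inner 𝕜 (s - r • a) ((r - b) • a) = 0 := by rw [inner_smul_right, hr, mul_zero]
  have hsplit : s - b • a = (s - r • a) + (r - b) • a := by rw [sub_smul]; abel
  rw [hsplit, sq, norm_add_sq_eq_norm_sq_add_norm_sq_of_inner_eq_zero _ _ horth, norm_smul]
  ring

lemma norm_sum_smul_sq_of_orthonormal {v : ι → E} (hv : Orthonormal 𝕜 v) (s : Finset ι)
    (c : ι → 𝕜) : ‖∑ i ∈ s, c i • v i‖ ^ 2 = ∑ i ∈ s, ‖c i‖ ^ 2 := by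
  have h : ((‖∑ i ∈ s, c i • v i‖ ^ 2 : ℝ) : 𝕜) = ((∑ i ∈ s, ‖c i‖ ^ 2 : ℝ) : 𝕜) := by
    push_cast
    rw [← inner_self_eq_norm_sq_to_K, hv.inner_sum]
    exact Finset.sum_congr rfl fun i _ => RCLike.conj_mul _
  exact_mod_cast h

variable (W : Submodule 𝕜 E)

lemma norm_sq_mul_one_sub_le_norm_smul_sub_sq [W.HasOrthogonalProjection] {u x : E}
    (hu : ‖u‖ = 1) (hx : x ∈ W) (c : 𝕜) :
    ‖c‖ ^ 2 * (1 - ‖W.starProjection u‖ ^ 2) ≤ ‖c • u - x‖ ^ 2 := by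
  have hcompl : 1 - ‖W.starProjection u‖ ^ 2 = ‖Wᗮ.starProjection u‖ ^ 2 := by
    have := W.norm_sq_eq_add_norm_sq_starProjection u
    rw [hu] at this
    linarith
  have hproj : Wᗮ.starProjection (c • u - x) = c • Wᗮ.starProjection u := by
    have hx0 : Wᗮ.starProjection x = 0 := by
      simp [W.starProjection_eq_self_iff.mpr hx]
    rw [map_sub, map_smul, hx0, sub_zero]
  calc ‖c‖ ^ 2 * (1 - ‖W.starProjection u‖ ^ 2) = ‖Wᗮ.starProjection (c • u - x)‖ ^ 2 := by
        rw [hcompl, hproj, norm_smul, mul_pow]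
    _ ≤ ‖c • u - x‖ ^ 2 := by
        gcongr
        exact Wᗮ.norm_starProjection_apply_le _

lemma sum_norm_sq_starProjection_le_finrank [FiniteDimensional 𝕜 W] {u : ι → E}
    (hu : Orthonormal 𝕜 u) (s : Finset ι) :
    ∑ i ∈ s, ‖W.starProjection (u i)‖ ^ 2 ≤ Module.finrank 𝕜 W := by
  let w := stdOrthonormalBasis 𝕜 W
  calc ∑ i ∈ s, ‖W.starProjection (u i)‖ ^ 2
      = ∑ i ∈ s, ∑ k, ‖inner 𝕜 (u i) (w k : E)‖ ^ 2 := by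
        refine Finset.sum_congr rfl fun i _ => ?_
        rw [Submodule.starProjection_apply, ← Submodule.coe_norm, ← w.sum_sq_norm_inner_left]
        simp only [Submodule.inner_orthogonalProjectionOnto_eq_of_mem_right]
    _ = ∑ k, ∑ i ∈ s, ‖inner 𝕜 (u i) (w k : E)‖ ^ 2 := Finset.sum_comm
    _ ≤ ∑ k, ‖(w k : E)‖ ^ 2 := Finset.sum_le_sum fun k _ => hu.sum_inner_products_le _
    _ = Module.finrank 𝕜 W := by simp [← Submodule.coe_norm]

end InnerProduct

section Frobenius

variable {m n : Type*} [Fintype m] [Fintype n]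

lemma frobSq_nonneg (M : Matrix m n ℂ) : 0 ≤ frobSq M :=
  Finset.sum_nonneg fun _ _ => Finset.sum_nonneg fun _ _ => Complex.normSq_nonneg _

lemma frobSq_eq_norm_sq (M : Matrix m n ℂ) :
    frobSq M = ‖WithLp.toLp 2 fun x : m × n => M x.1 x.2‖ ^ 2 := by
  simp [frobSq, EuclideanSpace.norm_sq_eq, Complex.normSq_eq_norm_sq, Fintype.sum_prod_type]

lemma frobSq_eq_zero_iff {M : Matrix m n ℂ} : frobSq M = 0 ↔ M = 0 := by
  rw [frobSq_eq_norm_sq, sq_eq_zero_iff, norm_eq_zero, WithLp.toLp_eq_zero, ← Matrix.ext_iff]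
  simp [funext_iff]

lemma frobSq_eq_sum_norm_sq_star_row (M : Matrix m n ℂ) :
    frobSq M = ∑ i, ‖WithLp.toLp 2 (star (M i))‖ ^ 2 := by
  simp [frobSq, EuclideanSpace.norm_sq_eq, Complex.normSq_eq_norm_sq]

lemma frobSq_sub_smul {A M : Matrix m n ℂ} {r : ℂ}
    (hr : (frobSq A : ℂ) * r = ∑ i, ∑ j, starRingEnd ℂ (A i j) * M i j) (b : ℂ) :
    frobSq (M - b • A) = frobSq (M - r • A) + frobSq A * ‖r - b‖ ^ 2 := by
  let a : EuclideanSpace ℂ (m × n) := WithLp.toLp 2 fun x => A x.1 x.2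
  let v : EuclideanSpace ℂ (m × n) := WithLp.toLp 2 fun x => M x.1 x.2
  have hfrob (c : ℂ) : frobSq (M - c • A) = ‖v - c • a‖ ^ 2 := frobSq_eq_norm_sq _
  have hnormal : inner ℂ a v = (frobSq A : ℂ) * r := by
    rw [hr, PiLp.inner_apply, Fintype.sum_prod_type]
    simp only [a, v, RCLike.inner_apply']
  have horth : inner ℂ (v - r • a) a = 0 := by
    rw [inner_eq_zero_symm, inner_sub_right, inner_smul_right, hnormal, inner_self_eq_norm_sq_to_K,
      frobSq_eq_norm_sq]
    simp [a, mul_comm]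
  rw [hfrob b, hfrob r, frobSq_eq_norm_sq A]
  exact norm_sub_smul_sq_of_inner_sub_smul_eq_zero horth b

lemma frobSq_submatrix_equiv {m' n' : Type*} [Fintype m'] [Fintype n'] (M : Matrix m n ℂ)
    (e : m' ≃ m) (f : n' ≃ n) : frobSq (M.submatrix e f) = frobSq M := by
  simp only [frobSq, submatrix_apply]
  rw [← e.sum_comp]
  exact Finset.sum_congr rfl fun i _ => f.sum_comp fun j => Complex.normSq (M (e i) j)

lemma sum_norm_mulVec_sq_le_frobSq {ι : Type*} {v : ι → EuclideanSpace ℂ n}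
    (hv : Orthonormal ℂ v) (s : Finset ι) (M : Matrix m n ℂ) :
    ∑ i ∈ s, ‖WithLp.toLp 2 (M *ᵥ (v i).ofLp)‖ ^ 2 ≤ frobSq M := by
  have hentry (i : ι) (a : m) :
      ‖(M *ᵥ (v i).ofLp) a‖ = ‖inner ℂ (v i) (WithLp.toLp 2 (star (M a)))‖ := by
    rw [← norm_inner_symm, EuclideanSpace.inner_eq_star_dotProduct, dotProduct_comm]
    simp [mulVec]
  simp_rw [EuclideanSpace.norm_sq_eq, hentry]
  rw [Finset.sum_comm, frobSq_eq_sum_norm_sq_star_row]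
  exact Finset.sum_le_sum fun a _ => hv.sum_inner_products_le _

end Frobenius

section EckartYoung

variable {m n ι : Type*}

/-- The partial sum `∑ i ∈ s, cᵢ uᵢ vᵢᴴ` of a sum of rank-one matrices. For orthonormal `u` and
`v` this is a singular value decomposition, up to phases absorbed into the complex coefficients
`c`; for `u = v` and real `c` it is an eigendecomposition. -/
def rankOneSum (s : Finset ι) (c : ι → ℂ) (u : ι → EuclideanSpace ℂ m)
    (v : ι → EuclideanSpace ℂ n) : Matrix m n ℂ :=
  ∑ i ∈ s, c i • vecMulVec (u i).ofLp (star (v i).ofLp)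

variable [Fintype n] {c : ι → ℂ} {u : ι → EuclideanSpace ℂ m} {v : ι → EuclideanSpace ℂ n}

lemma rankOneSum_mulVec (hv : Orthonormal ℂ v) {s : Finset ι} {j : ι} (hj : j ∈ s) :
    rankOneSum s c u v *ᵥ (v j).ofLp = c j • (u j).ofLp := by
  classical
  have hdot (i : ι) : star (v i).ofLp ⬝ᵥ (v j).ofLp = if i = j then 1 else 0 := by
    rw [← orthonormal_iff_ite.mp hv i j, EuclideanSpace.inner_eq_star_dotProduct, dotProduct_comm]
  simp [rankOneSum, Matrix.sum_mulVec, smul_mulVec, vecMulVec_mulVec, hdot, hj]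

variable [Fintype m]

/-- `T` consists of `r` terms of a singular value decomposition of `R` that belong to largest
singular values. The leading terms form a set `s` rather than an initial segment, so the
singular values need not be listed in order. -/
def IsTruncatedSVD (r : ℕ) (R T : Matrix m n ℂ) : Prop :=
  ∃ (N : ℕ) (s : Finset (Fin N)) (c : Fin N → ℂ) (u : Fin N → EuclideanSpace ℂ m)
    (v : Fin N → EuclideanSpace ℂ n), Orthonormal ℂ u ∧ Orthonormal ℂ v ∧
    (∀ i ∈ s, ∀ j ∉ s, ‖c j‖ ≤ ‖c i‖) ∧ s.card = r ∧
    R = rankOneSum Finset.univ c u v ∧ T = rankOneSum s c u v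

lemma frobSq_rankOneSum (hu : Orthonormal ℂ u) (hv : Orthonormal ℂ v) (s : Finset ι) :
    frobSq (rankOneSum s c u v) = ∑ i ∈ s, ‖c i‖ ^ 2 := by
  have hrow (a : m) : WithLp.toLp 2 (star (rankOneSum s c u v a)) =
      ∑ i ∈ s, star (c i * u i a) • v i := by
    ext b
    simp [rankOneSum, Matrix.sum_apply, vecMulVec_apply, mul_assoc]
  calc frobSq (rankOneSum s c u v) = ∑ a, ∑ i ∈ s, ‖c i‖ ^ 2 * ‖u i a‖ ^ 2 := by
        simp only [frobSq_eq_sum_norm_sq_star_row, hrow, norm_sum_smul_sq_of_orthonormal hv,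
          norm_star, norm_mul, mul_pow]
    _ = ∑ i ∈ s, ‖c i‖ ^ 2 * ‖u i‖ ^ 2 := by
        rw [Finset.sum_comm]
        simp only [EuclideanSpace.norm_sq_eq, Finset.mul_sum]
    _ = ∑ i ∈ s, ‖c i‖ ^ 2 := by simp [hu.norm_eq_one]

variable [Fintype ι]

lemma sum_norm_sq_sub_le_frobSq_rankOneSum_sub (hu : Orthonormal ℂ u) (hv : Orthonormal ℂ v)
    {X : Matrix m n ℂ} {W : Submodule ℂ (EuclideanSpace ℂ m)}
    (hW : ∀ x : n → ℂ, WithLp.toLp 2 (X *ᵥ x) ∈ W) :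
    ∑ i, ‖c i‖ ^ 2 - ∑ i, ‖c i‖ ^ 2 * ‖W.starProjection (u i)‖ ^ 2 ≤
      frobSq (rankOneSum Finset.univ c u v - X) := by
  calc ∑ i, ‖c i‖ ^ 2 - ∑ i, ‖c i‖ ^ 2 * ‖W.starProjection (u i)‖ ^ 2
      = ∑ i, ‖c i‖ ^ 2 * (1 - ‖W.starProjection (u i)‖ ^ 2) := by
        simp only [mul_sub, mul_one, Finset.sum_sub_distrib]
    _ ≤ ∑ i, ‖c i • u i - WithLp.toLp 2 (X *ᵥ (v i).ofLp)‖ ^ 2 :=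
        Finset.sum_le_sum fun i _ =>
          norm_sq_mul_one_sub_le_norm_smul_sub_sq W (hu.norm_eq_one i) (hW _) (c i)
    _ = ∑ i, ‖WithLp.toLp 2 ((rankOneSum Finset.univ c u v - X) *ᵥ (v i).ofLp)‖ ^ 2 := by
        simp only [sub_mulVec, rankOneSum_mulVec hv (Finset.mem_univ _), WithLp.toLp_sub,
          WithLp.toLp_smul, WithLp.toLp_ofLp]
    _ ≤ frobSq (rankOneSum Finset.univ c u v - X) := sum_norm_mulVec_sq_le_frobSq hv _ _

theorem frobSq_rankOneSum_sub_le (hu : Orthonormal ℂ u) (hv : Orthonormal ℂ v) {s : Finset ι}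
    (hs : ∀ i ∈ s, ∀ j ∉ s, ‖c j‖ ≤ ‖c i‖) {X : Matrix m n ℂ} (hX : X.rank ≤ s.card) :
    frobSq (rankOneSum Finset.univ c u v - rankOneSum s c u v) ≤
      frobSq (rankOneSum Finset.univ c u v - X) := by
  classical
  let W : Submodule ℂ (EuclideanSpace ℂ m) := LinearMap.range (toEuclideanLin X)
  have hfinrank : Module.finrank ℂ W = X.rank :=
    (X.rank_eq_finrank_range_toLin (PiLp.basisFun 2 ℂ m) (PiLp.basisFun 2 ℂ n)).symm
  have hweights : ∑ i, ‖c i‖ ^ 2 * ‖W.starProjection (u i)‖ ^ 2 ≤ ∑ i ∈ s, ‖c i‖ ^ 2 := by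
    refine sum_mul_le_sum_of_sum_le_card (fun i => sq_nonneg _)
      (fun i hi j hj => by gcongr; exact hs i hi j hj) (fun i => sq_nonneg _)
      (fun i => pow_le_one₀ (norm_nonneg _) ?_) ?_
    · exact (W.norm_starProjection_apply_le (u i)).trans_eq (hu.norm_eq_one i)
    · refine (sum_norm_sq_starProjection_le_finrank W hu _).trans ?_
      exact_mod_cast hfinrank.trans_le hX
  have htail : rankOneSum Finset.univ c u v - rankOneSum s c u v = rankOneSum sᶜ c u v :=
    sub_eq_of_eq_add (Finset.sum_compl_add_sum s _).symm
  calc frobSq (rankOneSum Finset.univ c u v - rankOneSum s c u v)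
      = ∑ i, ‖c i‖ ^ 2 - ∑ i ∈ s, ‖c i‖ ^ 2 := by
        rw [htail, frobSq_rankOneSum hu hv, ← Finset.sum_compl_add_sum s, add_sub_cancel_right]
    _ ≤ ∑ i, ‖c i‖ ^ 2 - ∑ i, ‖c i‖ ^ 2 * ‖W.starProjection (u i)‖ ^ 2 := by gcongr
    _ ≤ frobSq (rankOneSum Finset.univ c u v - X) :=
        sum_norm_sq_sub_le_frobSq_rankOneSum_sub hu hv fun x => ⟨WithLp.toLp 2 x, rfl⟩

theorem IsTruncatedSVD.frobSq_sub_le {r : ℕ} {R T X : Matrix m n ℂ} (h : IsTruncatedSVD r R T)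
    (hX : X.rank ≤ r) : frobSq (R - T) ≤ frobSq (R - X) := by
  obtain ⟨N, s, c, u, v, hu, hv, hs, rfl, rfl, rfl⟩ := h
  exact frobSq_rankOneSum_sub_le hu hv hs hX

lemma isTruncatedSVD_of_eigendecomposition {N r : ℕ} (hr : r ≤ N) {lam : Fin N → ℝ}
    {u : Fin N → m → ℂ} (hanti : Antitone lam) (hnonneg : ∀ i, 0 ≤ lam i)
    (horth : ∀ i j, star (u i) ⬝ᵥ u j = if i = j then 1 else 0) {R T : Matrix m m ℂ}
    (hR : R = ∑ i, (lam i : ℂ) • vecMulVec (u i) (star (u i)))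
    (hT : T = ∑ i ∈ Finset.univ.filter (fun i : Fin N => (i : ℕ) < r),
      (lam i : ℂ) • vecMulVec (u i) (star (u i))) : IsTruncatedSVD r R T := by
  have hu : Orthonormal ℂ fun i => (WithLp.toLp 2 (u i) : EuclideanSpace ℂ m) := by
    rw [orthonormal_iff_ite]
    intro i j
    rw [← horth i j, EuclideanSpace.inner_toLp_toLp, dotProduct_comm]
  refine ⟨N, _, fun i => lam i, _, _, hu, hu, fun i hi j hj => ?_, ?_, hR, hT⟩
  · simp only [Finset.mem_filter_univ] at hi hj
    have hij : i ≤ j := Fin.le_def.mpr (by omega)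
    simpa [abs_of_nonneg, hnonneg] using hanti hij
  · rw [Fin.card_filter_val_lt, min_eq_right hr]

end EckartYoung

section Kronecker

variable {m n k l : Type*}

/-- The partial Frobenius inner product `⟨A, S⟩` over the first Kronecker factor, conjugate-linear
in `A`. The least-squares solution `R` of `S ≈ A ⊗ R` has normal equation
`‖A‖² R = kroneckerContractLeft A S`. -/
def kroneckerContractLeft [Fintype m] [Fintype n] (A : Matrix m n ℂ)
    (S : Matrix (m × k) (n × l) ℂ) : Matrix k l ℂ :=
  of fun a b => ∑ i, ∑ j, starRingEnd ℂ (A i j) * S (i, a) (j, b)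

/-- The partial Frobenius inner product `⟨B, S⟩` over the second Kronecker factor, conjugate-linear
in `B`. The least-squares solution `R` of `S ≈ R ⊗ B` has normal equation
`‖B‖² R = kroneckerContractRight B S`. -/
def kroneckerContractRight [Fintype k] [Fintype l] (B : Matrix k l ℂ)
    (S : Matrix (m × k) (n × l) ℂ) : Matrix m n ℂ :=
  of fun i j => ∑ a, ∑ b, starRingEnd ℂ (B a b) * S (i, a) (j, b)

variable [Fintype m] [Fintype n] [Fintype k] [Fintype l]

lemma frobSq_eq_sum_frobSq_submatrix (M : Matrix (m × k) (n × l) ℂ) :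
    frobSq M = ∑ a, ∑ b, frobSq (M.submatrix (fun i => (i, a)) fun j => (j, b)) := by
  simp only [frobSq, submatrix_apply, Fintype.sum_prod_type]
  rw [Finset.sum_comm]
  refine Finset.sum_congr rfl fun a _ => ?_
  exact (Finset.sum_congr rfl fun i _ => Finset.sum_comm).trans Finset.sum_comm

theorem frobSq_sub_kronecker_eq_add {S : Matrix (m × k) (n × l) ℂ} {A : Matrix m n ℂ}
    {R : Matrix k l ℂ} (hR : (frobSq A : ℂ) • R = kroneckerContractLeft A S) (B : Matrix k l ℂ) :
    frobSq (S - A ⊗ₖ B) = frobSq (S - A ⊗ₖ R) + frobSq A * frobSq (R - B) := by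
  have hslice (C : Matrix k l ℂ) (a : k) (b : l) :
      (S - A ⊗ₖ C).submatrix (fun i => (i, a)) (fun j => (j, b)) =
        S.submatrix (fun i => (i, a)) (fun j => (j, b)) - C a b • A := by
    ext i j
    simp [mul_comm]
  have hRB : frobSq (R - B) = ∑ a, ∑ b, ‖R a b - B a b‖ ^ 2 := by
    simp only [frobSq, Complex.normSq_eq_norm_sq, Matrix.sub_apply]
  simp only [frobSq_eq_sum_frobSq_submatrix (S - _), hslice, hRB, Finset.mul_sum,
    ← Finset.sum_add_distrib]
  exact Finset.sum_congr rfl fun a _ => Finset.sum_congr rfl fun b _ =>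
    frobSq_sub_smul (congrFun (congrFun hR a) b) (B a b)

theorem frobSq_sub_kronecker_le_of_right {S : Matrix (m × k) (n × l) ℂ} {A : Matrix m n ℂ}
    {R B B' : Matrix k l ℂ} (hR : (frobSq A : ℂ) • R = kroneckerContractLeft A S)
    (h : frobSq (R - B') ≤ frobSq (R - B)) :
    frobSq (S - A ⊗ₖ B') ≤ frobSq (S - A ⊗ₖ B) := by
  rw [frobSq_sub_kronecker_eq_add hR B', frobSq_sub_kronecker_eq_add hR B]
  gcongr
  exact frobSq_nonneg A

lemma frobSq_sub_kronecker_swap (S : Matrix (m × k) (n × l) ℂ) (A : Matrix m n ℂ)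
    (B : Matrix k l ℂ) :
    frobSq (S.submatrix Prod.swap Prod.swap - B ⊗ₖ A) = frobSq (S - A ⊗ₖ B) := by
  rw [← frobSq_submatrix_equiv (S - A ⊗ₖ B) (Equiv.prodComm k m) (Equiv.prodComm l n)]
  congr 1
  ext x y
  simp [mul_comm]

theorem frobSq_sub_kronecker_le_of_left {S : Matrix (m × k) (n × l) ℂ} {B : Matrix k l ℂ}
    {R A A' : Matrix m n ℂ} (hR : (frobSq B : ℂ) • R = kroneckerContractRight B S)
    (h : frobSq (R - A') ≤ frobSq (R - A)) :
    frobSq (S - A' ⊗ₖ B) ≤ frobSq (S - A ⊗ₖ B) := by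
  rw [← frobSq_sub_kronecker_swap S A', ← frobSq_sub_kronecker_swap S A]
  exact frobSq_sub_kronecker_le_of_right hR h

end Kronecker

section Blocks

variable {p q : ℕ} {S : Matrix (Fin p × Fin q) (Fin p × Fin q) ℂ}

lemma frobSq_smul_eq_kroneckerContractLeft {A : Matrix (Fin p) (Fin p) ℂ} (hA : A ≠ 0)
    {R : Matrix (Fin q) (Fin q) ℂ}
    (hR : R = (frobSq A : ℂ)⁻¹ • ∑ i, ∑ j, starRingEnd ℂ (A i j) • blk S i j) :
    (frobSq A : ℂ) • R = kroneckerContractLeft A S := by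
  have hA0 : (frobSq A : ℂ) ≠ 0 := by simpa [frobSq_eq_zero_iff] using hA
  rw [hR, smul_inv_smul₀ hA0]
  ext a b
  simp [Matrix.sum_apply, blk, kroneckerContractLeft]

lemma frobSq_smul_eq_kroneckerContractRight {B : Matrix (Fin q) (Fin q) ℂ} (hB : B ≠ 0)
    {R : Matrix (Fin p) (Fin p) ℂ}
    (hR : R = of fun i j => (Bᴴ * blk S i j).trace / (frobSq B : ℂ)) :
    (frobSq B : ℂ) • R = kroneckerContractRight B S := by
  have hB0 : (frobSq B : ℂ) ≠ 0 := by simpa [frobSq_eq_zero_iff] using hB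
  ext i j
  rw [hR, Matrix.smul_apply, of_apply, smul_eq_mul, mul_div_cancel₀ _ hB0, kroneckerContractRight,
    of_apply, Finset.sum_comm]
  simp [Matrix.trace, Matrix.mul_apply, blk]

end Blocks

theorem lrkron_iteration_monotone_general {m n k l : Type*} [Fintype m] [Fintype n] [Fintype k]
    [Fintype l] {S : Matrix (m × k) (n × l) ℂ} {ra rb : ℕ}
    {A A' RA : Matrix m n ℂ} {B B' RB : Matrix k l ℂ} (hA : A.rank ≤ ra) (hB : B.rank ≤ rb)
    (hRB : (frobSq A : ℂ) • RB = kroneckerContractLeft A S) (hB' : IsTruncatedSVD rb RB B')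
    (hRA : (frobSq B' : ℂ) • RA = kroneckerContractRight B' S) (hA' : IsTruncatedSVD ra RA A') :
    Real.sqrt (frobSq (S - A' ⊗ₖ B')) ≤ Real.sqrt (frobSq (S - A ⊗ₖ B')) ∧
    Real.sqrt (frobSq (S - A ⊗ₖ B')) ≤ Real.sqrt (frobSq (S - A ⊗ₖ B)) :=
  ⟨Real.sqrt_le_sqrt (frobSq_sub_kronecker_le_of_left hRA (hA'.frobSq_sub_le hA)),
    Real.sqrt_le_sqrt (frobSq_sub_kronecker_le_of_right hRB (hB'.frobSq_sub_le hB))⟩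

/-- One iteration of the LR-Kron alternating minimization does not increase the objective:
with B_{k+1} = EIG_{r_b}(R_B) computed from A_k and A_{k+1} = EIG_{r_a}(R_A) computed from
B_{k+1}, we have ‖S − A_{k+1}⊗B_{k+1}‖_F ≤ ‖S − A_k⊗B_{k+1}‖_F ≤ ‖S − A_k⊗B_k‖_F. -/
theorem lrkron_iteration_monotone {p q : ℕ}
    (S : Matrix (Fin p × Fin q) (Fin p × Fin q) ℂ) (hS : S.PosSemidef)
    (ra rb : ℕ) (hra1 : 1 ≤ ra) (hrap : ra ≤ p) (hrb1 : 1 ≤ rb) (hrbq : rb ≤ q)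
    (Ak : Matrix (Fin p) (Fin p) ℂ) (hAk : Ak.PosSemidef) (hAk0 : Ak ≠ 0)
    (hAkrank : Ak.rank ≤ ra)
    (Bk : Matrix (Fin q) (Fin q) ℂ) (hBkrank : Bk.rank ≤ rb)
    -- the B-update: B_{k+1} = EIG_{r_b}(R_B)
    (RB : Matrix (Fin q) (Fin q) ℂ)
    (hRB : RB = ((frobSq Ak : ℂ))⁻¹ • ∑ i, ∑ j, (starRingEnd ℂ) (Ak i j) • blk S i j)
    (lamB : Fin q → ℝ) (uB : Fin q → Fin q → ℂ)
    (hantiB : Antitone lamB) (hnonnegB : ∀ i, 0 ≤ lamB i)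
    (horthB : ∀ i j, star (uB i) ⬝ᵥ uB j = if i = j then 1 else 0)
    (hdecB : RB = ∑ i, (lamB i : ℂ) • Matrix.vecMulVec (uB i) (star (uB i)))
    (Bk1 : Matrix (Fin q) (Fin q) ℂ)
    (hBk1 : Bk1 = ∑ i ∈ Finset.univ.filter (fun i : Fin q => (i : ℕ) < rb),
      (lamB i : ℂ) • Matrix.vecMulVec (uB i) (star (uB i)))
    (hBk10 : Bk1 ≠ 0)
    -- the A-update: A_{k+1} = EIG_{r_a}(R_A)
    (RA : Matrix (Fin p) (Fin p) ℂ)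
    (hRA : RA = Matrix.of fun i j => (Bk1ᴴ * blk S i j).trace / (frobSq Bk1 : ℂ))
    (lamA : Fin p → ℝ) (uA : Fin p → Fin p → ℂ)
    (hantiA : Antitone lamA) (hnonnegA : ∀ i, 0 ≤ lamA i)
    (horthA : ∀ i j, star (uA i) ⬝ᵥ uA j = if i = j then 1 else 0)
    (hdecA : RA = ∑ i, (lamA i : ℂ) • Matrix.vecMulVec (uA i) (star (uA i)))
    (Ak1 : Matrix (Fin p) (Fin p) ℂ)
    (hAk1 : Ak1 = ∑ i ∈ Finset.univ.filter (fun i : Fin p => (i : ℕ) < ra),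
      (lamA i : ℂ) • Matrix.vecMulVec (uA i) (star (uA i))) :
    Real.sqrt (frobSq (S - Ak1 ⊗ₖ Bk1)) ≤ Real.sqrt (frobSq (S - Ak ⊗ₖ Bk1)) ∧
    Real.sqrt (frobSq (S - Ak ⊗ₖ Bk1)) ≤ Real.sqrt (frobSq (S - Ak ⊗ₖ Bk)) :=
  lrkron_iteration_monotone_general hAkrank hBkrank
    (frobSq_smul_eq_kroneckerContractLeft hAk0 hRB)
    (isTruncatedSVD_of_eigendecomposition hrbq hantiB hnonnegB horthB hdecB hBk1)
    (frobSq_smul_eq_kroneckerContractRight hBk10 hRA)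
    (isTruncatedSVD_of_eigendecomposition hrap hantiA hnonnegA horthA hdecA hAk1)
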